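/- arXiv:1912.04815 — 2 statements merged into one kernel-verified Lean document; each statement's English description precedes it below -/
import Mathlib

section
/- Let n ≥ 1, let P be an n×n nonnegative row sub-stochastic matrix, and let w ∈ ℝ^n with w ≥ 0. For c ∈ ℝ^n, let x̲(c) and x̄(c) denote respectively the minimal and maximal equilibrium of the network (P, w) with exogenous flow c. Then both maps c ↦ x̲(c) and c ↦ x̄(c) are monotone nondecreasing: if c₁ ≤ c₂ entrywise then x̲(c₁) ≤ x̲(c₂) and x̄(c₁) ≤ x̄(c₂) entrywise. -/
open Matrix Finset Filter Topology

/-- The saturation function `S_0^w`. -/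
def sat {n : ℕ} (w y : Fin n → ℝ) : Fin n → ℝ := fun i => min (max (y i) 0) (w i)

/-- `x` is an equilibrium of the network `(P, w)` with exogenous flow `c`. -/
def IsEquil {n : ℕ} (P : Matrix (Fin n) (Fin n) ℝ) (w c x : Fin n → ℝ) : Prop :=
  x = sat w (Pᵀ.mulVec x + c)

/-!
An equilibrium for the larger flow `c₂` is mapped below itself by the network map of the smaller
flow `c₁`. Knaster–Tarski on an order interval below it yields an equilibrium for `c₁`, which the
minimal equilibrium for `c₁` cannot exceed. The claim on maximal equilibria is the order dual.
-/

section FixedPoints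

variable {α : Type*} [ConditionallyCompleteLattice α] {f : α → α}

theorem exists_isFixedPt_mem_Icc {a b : α} (hab : a ≤ b) (hf : MonotoneOn f (Set.Icc a b))
    (ha : a ≤ f a) (hb : f b ≤ b) : ∃ x ∈ Set.Icc a b, Function.IsFixedPt f x := by
  have : Fact (a ≤ b) := ⟨hab⟩
  have hmaps : Set.MapsTo f (Set.Icc a b) (Set.Icc a b) := fun x hx =>
    ⟨ha.trans (hf (Set.left_mem_Icc.2 hab) hx hx.1),
      (hf hx (Set.right_mem_Icc.2 hab) hx.2).trans hb⟩
  let F : Set.Icc a b →o Set.Icc a b :=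
    ⟨hmaps.restrict f _ _, fun x y hxy => hf x.2 y.2 hxy⟩
  exact ⟨F.lfp, F.lfp.2, congrArg Subtype.val F.map_lfp⟩

theorem exists_isFixedPt_le_of_map_le (hf : Monotone f) (hbdd : BddBelow (Set.range f))
    {y : α} (hy : f y ≤ y) : ∃ x ≤ y, Function.IsFixedPt f x := by
  obtain ⟨a, ha⟩ := hbdd
  have ha_le (x : α) : a ≤ f x := ha ⟨x, rfl⟩
  obtain ⟨x, hx, hfix⟩ :=
    exists_isFixedPt_mem_Icc ((ha_le y).trans hy) (hf.monotoneOn _) (ha_le a) hy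
  exact ⟨x, hx.2, hfix⟩

theorem exists_isFixedPt_ge_of_le_map (hf : Monotone f) (hbdd : BddAbove (Set.range f))
    {y : α} (hy : y ≤ f y) : ∃ x ≥ y, Function.IsFixedPt f x :=
  exists_isFixedPt_le_of_map_le (α := αᵒᵈ) hf.dual hbdd.dual hy

end FixedPoints

theorem mulVec_monotone_of_nonneg {m n R : Type*} [Fintype n] [Semiring R] [PartialOrder R]
    [IsOrderedRing R] {A : Matrix m n R} (hA : ∀ i j, 0 ≤ A i j) : Monotone A.mulVec :=
  fun _ _ h i => dotProduct_le_dotProduct_of_nonneg_left h (hA i)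

section Network

variable {n : ℕ}

theorem sat_monotone (w : Fin n → ℝ) : Monotone (sat w) :=
  fun _ _ h => inf_le_inf_right w (sup_le_sup_right h 0)

theorem zero_inf_le_sat (w y : Fin n → ℝ) : 0 ⊓ w ≤ sat w y :=
  inf_le_inf_right w (le_sup_right (a := y))

theorem sat_le (w y : Fin n → ℝ) : sat w y ≤ w :=
  inf_le_right (a := y ⊔ 0)

/-- The self-map `x ↦ S_0^w(Pᵀx + c)` of `ℝⁿ`, whose fixed points are the equilibria of the
network `(P, w)` with exogenous flow `c`. -/
def networkMap (P : Matrix (Fin n) (Fin n) ℝ) (w c x : Fin n → ℝ) : Fin n → ℝ :=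
  sat w (Pᵀ *ᵥ x + c)

variable {P : Matrix (Fin n) (Fin n) ℝ} {w c c₁ c₂ x : Fin n → ℝ}

theorem isEquil_iff_isFixedPt : IsEquil P w c x ↔ Function.IsFixedPt (networkMap P w c) x :=
  eq_comm

theorem networkMap_monotone (hP : ∀ i j, 0 ≤ P i j) (w c : Fin n → ℝ) :
    Monotone (networkMap P w c) :=
  (sat_monotone w).comp <| (mulVec_monotone_of_nonneg fun i j => hP j i).add_const c

theorem networkMap_monotone_flow (P : Matrix (Fin n) (Fin n) ℝ) (w : Fin n → ℝ) :
    Monotone (networkMap P w) :=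
  fun _ _ hc x => sat_monotone w (add_le_add_right hc (Pᵀ *ᵥ x))

theorem bddBelow_range_networkMap (P : Matrix (Fin n) (Fin n) ℝ) (w c : Fin n → ℝ) :
    BddBelow (Set.range (networkMap P w c)) :=
  ⟨0 ⊓ w, Set.forall_mem_range.2 fun _ => zero_inf_le_sat w _⟩

theorem bddAbove_range_networkMap (P : Matrix (Fin n) (Fin n) ℝ) (w c : Fin n → ℝ) :
    BddAbove (Set.range (networkMap P w c)) :=
  ⟨w, Set.forall_mem_range.2 fun _ => sat_le w _⟩

theorem IsEquil.exists_isEquil_le (hx : IsEquil P w c₂ x) (hP : ∀ i j, 0 ≤ P i j)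
    (hc : c₁ ≤ c₂) : ∃ y ≤ x, IsEquil P w c₁ y := by
  have hle : networkMap P w c₁ x ≤ x :=
    (networkMap_monotone_flow P w hc x).trans_eq (isEquil_iff_isFixedPt.1 hx)
  simpa only [isEquil_iff_isFixedPt] using exists_isFixedPt_le_of_map_le
    (networkMap_monotone hP w c₁) (bddBelow_range_networkMap P w c₁) hle

theorem IsEquil.exists_isEquil_ge (hx : IsEquil P w c₁ x) (hP : ∀ i j, 0 ≤ P i j)
    (hc : c₁ ≤ c₂) : ∃ y ≥ x, IsEquil P w c₂ y := by
  have hle : x ≤ networkMap P w c₂ x :=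
    (isEquil_iff_isFixedPt.1 hx).symm.trans_le (networkMap_monotone_flow P w hc x)
  simpa only [isEquil_iff_isFixedPt] using exists_isFixedPt_ge_of_le_map
    (networkMap_monotone hP w c₂) (bddAbove_range_networkMap P w c₂) hle

theorem minimal_maximal_equilibria_monotone_in_c_general
    (hP : ∀ i j, 0 ≤ P i j) (hc : c₁ ≤ c₂) {xlo₁ xlo₂ xhi₁ xhi₂ : Fin n → ℝ}
    (hlo₁ : IsLeast {x | IsEquil P w c₁ x} xlo₁) (hlo₂ : IsLeast {x | IsEquil P w c₂ x} xlo₂)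
    (hhi₁ : IsGreatest {x | IsEquil P w c₁ x} xhi₁)
    (hhi₂ : IsGreatest {x | IsEquil P w c₂ x} xhi₂) :
    xlo₁ ≤ xlo₂ ∧ xhi₁ ≤ xhi₂ := by
  obtain ⟨y, hy_le, hy⟩ := hlo₂.1.exists_isEquil_le hP hc
  obtain ⟨z, hz_ge, hz⟩ := hhi₁.1.exists_isEquil_ge hP hc
  exact ⟨(hlo₁.2 hy).trans hy_le, hz_ge.trans (hhi₂.2 hz)⟩

end Network

/-- the minimal and maximal equilibria depend monotonically on the exogenous
flow `c`: if `c₁ ≤ c₂` then the minimal (resp. maximal) equilibrium for `c₁` is `≤` the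
minimal (resp. maximal) equilibrium for `c₂`. -/
theorem minimal_maximal_equilibria_monotone_in_c
    {n : ℕ} (hn : 1 ≤ n) (P : Matrix (Fin n) (Fin n) ℝ)
    (hP : ∀ i j, 0 ≤ P i j) (hsub : ∀ i, ∑ j, P i j ≤ 1)
    (w : Fin n → ℝ) (hw : 0 ≤ w)
    (c₁ c₂ : Fin n → ℝ) (hc : c₁ ≤ c₂)
    (xlo₁ xlo₂ xhi₁ xhi₂ : Fin n → ℝ)
    (hlo₁ : IsEquil P w c₁ xlo₁ ∧ ∀ y, IsEquil P w c₁ y → xlo₁ ≤ y)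
    (hlo₂ : IsEquil P w c₂ xlo₂ ∧ ∀ y, IsEquil P w c₂ y → xlo₂ ≤ y)
    (hhi₁ : IsEquil P w c₁ xhi₁ ∧ ∀ y, IsEquil P w c₁ y → y ≤ xhi₁)
    (hhi₂ : IsEquil P w c₂ xhi₂ ∧ ∀ y, IsEquil P w c₂ y → y ≤ xhi₂) :
    xlo₁ ≤ xlo₂ ∧ xhi₁ ≤ xhi₂ :=
  minimal_maximal_equilibria_monotone_in_c_general hP hc hlo₁ hlo₂ hhi₁ hhi₂
end

section
/- Let n ≥ 1, let P be an n×n nonnegative row sub-stochastic matrix, and let w ∈ ℝ^n with w ≥ 0. Let U = {c ∈ ℝ^n : the network (P, w) with exogenous flow c has exactly one equilibrium}, and for c ∈ U let x(c) denote that unique equilibrium. Then the map c ↦ x(c) is continuous on U: for every c* ∈ U and every sequence (c(k)) in U with c(k) → c*, one has x(c(k)) → x(c*). -/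
open Matrix Finset Filter Topology

/-! Saturation confines every equilibrium to a fixed compact box, and by continuity of `sat` the
pairs `(c, x)` with `x` an equilibrium for `c` form a closed set. Hence, as `c → c₀`, every cluster
point of equilibria for `c` is an equilibrium for `c₀`; if there is only one of these, the
equilibria, staying in a compact set, converge to it. -/

theorem tendsto_nhds_of_isClosed_of_unique {α X Y : Type*} [TopologicalSpace X]
    [TopologicalSpace Y] {R : Set (X × Y)} {K : Set Y} {l : Filter α} {f : α → X} {g : α → Y}
    {x : X} {y : Y} (hR : IsClosed R) (hK : IsCompact K) (hf : Tendsto f l (𝓝 x))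
    (hgK : ∀ᶠ a in l, g a ∈ K) (hfg : ∀ᶠ a in l, (f a, g a) ∈ R)
    (hunique : ∀ z, (x, z) ∈ R → z = y) : Tendsto g l (𝓝 y) := by
  refine hK.tendsto_nhds_of_unique_mapClusterPt hgK fun z _ hz => hunique z ?_
  obtain ⟨u, hul, hgu⟩ := mapClusterPt_iff_ultrafilter.1 hz
  exact hR.mem_of_tendsto ((hf.mono_left hul).prodMk_nhds hgu) (hfg.filter_mono hul)

section Equilibrium

variable {n : ℕ} (P : Matrix (Fin n) (Fin n) ℝ) (w : Fin n → ℝ)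

theorem continuous_sat : Continuous (sat w) := by
  unfold sat
  fun_prop

theorem sat_mem_Icc (y : Fin n → ℝ) : sat w y ∈ Set.Icc (0 ⊓ w) w :=
  ⟨fun _ => min_le_min_right _ (le_max_right _ _), fun _ => min_le_right _ _⟩

variable {P w} in
theorem IsEquil.mem_Icc {c x : Fin n → ℝ} (hx : IsEquil P w c x) : x ∈ Set.Icc (0 ⊓ w) w :=
  Set.mem_of_eq_of_mem hx (sat_mem_Icc w _)

theorem isClosed_setOf_isEquil :
    IsClosed {q : (Fin n → ℝ) × (Fin n → ℝ) | IsEquil P w q.1 q.2} :=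
  isClosed_eq continuous_snd <| (continuous_sat w).comp <|
    (continuous_const.matrix_mulVec continuous_snd).add continuous_fst

variable {P w} in
theorem unique_equilibrium_map_continuous_general {α : Type*} {l : Filter α}
    {c x : α → Fin n → ℝ} {c₀ x₀ : Fin n → ℝ} (hc : Tendsto c l (𝓝 c₀))
    (hx : ∀ᶠ a in l, IsEquil P w (c a) (x a)) (hunique : ∀ z, IsEquil P w c₀ z → z = x₀) :
    Tendsto x l (𝓝 x₀) :=
  tendsto_nhds_of_isClosed_of_unique (isClosed_setOf_isEquil P w) isCompact_Icc hc
    (hx.mono fun _ => IsEquil.mem_Icc) hx hunique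

end Equilibrium

/-- on the set `U` of exogenous flows with a unique equilibrium, the map
`c ↦ x(c)` is (sequentially) continuous: if `c* ∈ U` and `c(k) ∈ U` for all `k` with
`c(k) → c*`, then `x(c(k)) → x(c*)`. -/
theorem unique_equilibrium_map_continuous
    {n : ℕ} (hn : 1 ≤ n) (P : Matrix (Fin n) (Fin n) ℝ)
    (hP : ∀ i j, 0 ≤ P i j) (hsub : ∀ i, ∑ j, P i j ≤ 1)
    (w : Fin n → ℝ) (hw : 0 ≤ w)
    (xu : (Fin n → ℝ) → (Fin n → ℝ))
    (hxu : ∀ c : Fin n → ℝ, (∃! x, IsEquil P w c x) → IsEquil P w c (xu c)) :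
    ∀ cstar : Fin n → ℝ, (∃! x, IsEquil P w cstar x) →
      ∀ cseq : ℕ → Fin n → ℝ,
        (∀ k, ∃! x, IsEquil P w (cseq k) x) →
        Tendsto cseq atTop (𝓝 cstar) →
        Tendsto (fun k => xu (cseq k)) atTop (𝓝 (xu cstar)) := by
  intro cstar hstar cseq hseq hlim
  exact unique_equilibrium_map_continuous_general hlim (.of_forall fun k => hxu _ (hseq k))
    fun _ hz => hstar.unique hz (hxu _ hstar)
end
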